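/- There is an absolute constant C ≥ 1 such that the following holds. Let p ∈ (0,1/2], K ≥ 1, and let f : {0,1}^n → {0,1} be a Boolean function with p·I[f] < K·μ_p(f). Then there is a set J ⊆ [n] with |J| ≤ C·K such that μ_p(f_{J→1}) ≥ e^{−C·K}. -/

import Mathlib

open Finset

namespace GlobalHC

variable {n : ℕ}

/-- Expectation with respect to the `p`-biased measure on `{0,1}^n`. -/
noncomputable def Ep (p : ℝ) (f : (Fin n → Bool) → ℝ) : ℝ :=
  ∑ x : Fin n → Bool, (∏ i, if x i then p else 1 - p) * f x

/-- The `r`-norm with respect to the `p`-biased measure. -/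
noncomputable def pnorm (p r : ℝ) (f : (Fin n → Bool) → ℝ) : ℝ :=
  (Ep p fun x => |f x| ^ r) ^ (1 / r)

/-- The `p`-biased character `χ_S`. -/
noncomputable def chi (p : ℝ) (S : Finset (Fin n)) (x : Fin n → Bool) : ℝ :=
  ∏ i ∈ S, ((if x i then (1 : ℝ) else 0) - p) / Real.sqrt (p * (1 - p))

/-- The `p`-biased Fourier coefficient `f̂(S)`. -/
noncomputable def coeff (p : ℝ) (f : (Fin n → Bool) → ℝ) (S : Finset (Fin n)) : ℝ :=
  Ep p fun x => f x * chi p S x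

/-- The derivative `D_S f = Σ_{T ⊇ S} f̂(T) χ_{T∖S}`. -/
noncomputable def derivS (p : ℝ) (S : Finset (Fin n)) (f : (Fin n → Bool) → ℝ) :
    (Fin n → Bool) → ℝ :=
  fun x => ∑ T ∈ Finset.univ.filter (fun T => S ⊆ T), coeff p f T * chi p (T \ S) x

/-- The generalised influence `I_S(f) = σ^{-2|S|} Σ_{T ⊇ S} f̂(T)²`. -/
noncomputable def genInf (p : ℝ) (S : Finset (Fin n)) (f : (Fin n → Bool) → ℝ) : ℝ :=
  (∑ T ∈ Finset.univ.filter (fun T => S ⊆ T), coeff p f T ^ 2) / (p * (1 - p)) ^ S.card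

/-- The noise operator `T_ρ f = Σ_S ρ^{|S|} f̂(S) χ_S`. -/
noncomputable def noise (p ρ : ℝ) (f : (Fin n → Bool) → ℝ) : (Fin n → Bool) → ℝ :=
  fun x => ∑ S : Finset (Fin n), ρ ^ S.card * coeff p f S * chi p S x

/-- The degree-`r` truncation `f^{≤ r}`. -/
noncomputable def trunc (p : ℝ) (r : ℕ) (f : (Fin n → Bool) → ℝ) : (Fin n → Bool) → ℝ :=
  fun x => ∑ S ∈ Finset.univ.filter (fun S : Finset (Fin n) => S.card ≤ r),
    coeff p f S * chi p S x

/-- The restriction `f_{J→1}` setting all coordinates in `J` to `1`. -/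
def restrict1 (J : Finset (Fin n)) (f : (Fin n → Bool) → ℝ) : (Fin n → Bool) → ℝ :=
  fun x => f (fun i => if i ∈ J then true else x i)

/-- `f` is `(r,δ)`-global (for the `p`-biased measure). -/
def IsGlobal (p r δ : ℝ) (f : (Fin n → Bool) → ℝ) : Prop :=
  ∀ J : Finset (Fin n), (J.card : ℝ) ≤ r → Ep p (restrict1 J f) ≤ Ep p f + δ

/-- The total influence `I[f] = Σ_i Pr_{μ_p}[f(x ⊕ e_i) ≠ f(x)]`. -/
noncomputable def totalInf (p : ℝ) (f : (Fin n → Bool) → ℝ) : ℝ :=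
  ∑ i : Fin n, Ep p fun x => if f (Function.update x i (!x i)) = f x then 0 else 1

/-- Noise stability `Stab_ρ(f) = Σ_S ρ^{|S|} f̂(S)²` (w.r.t. `μ_p`). -/
noncomputable def stab (p ρ : ℝ) (f : (Fin n → Bool) → ℝ) : ℝ :=
  ∑ S : Finset (Fin n), ρ ^ S.card * coeff p f S ^ 2

/-- `f` is monotone. -/
def Mono (f : (Fin n → Bool) → ℝ) : Prop :=
  ∀ x y : Fin n → Bool, (∀ i, x i ≤ y i) → f x ≤ f y


/-! ### Basic facts about the expectation -/

lemma wt_nonneg {p : ℝ} (hp : 0 < p) (hp1 : p < 1) (x : Fin n → Bool) :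
    0 ≤ ∏ i, (if x i then p else 1 - p) := by
  apply Finset.prod_nonneg
  intro i _
  split_ifs <;> linarith

lemma Ep_mono {p : ℝ} (hp : 0 < p) (hp1 : p < 1) {f g : (Fin n → Bool) → ℝ}
    (h : ∀ x, f x ≤ g x) : Ep p f ≤ Ep p g := by
  unfold Ep
  exact Finset.sum_le_sum fun x _ => mul_le_mul_of_nonneg_left (h x) (wt_nonneg hp hp1 x)

lemma Ep_nonneg {p : ℝ} (hp : 0 < p) (hp1 : p < 1) {f : (Fin n → Bool) → ℝ}
    (h : ∀ x, 0 ≤ f x) : 0 ≤ Ep p f := by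
  unfold Ep
  exact Finset.sum_nonneg fun x _ => mul_nonneg (wt_nonneg hp hp1 x) (h x)

lemma Ep_add (p : ℝ) (f g : (Fin n → Bool) → ℝ) :
    Ep p (fun x => f x + g x) = Ep p f + Ep p g := by
  simp [Ep, mul_add, Finset.sum_add_distrib]

lemma Ep_sub (p : ℝ) (f g : (Fin n → Bool) → ℝ) :
    Ep p (fun x => f x - g x) = Ep p f - Ep p g := by
  simp [Ep, mul_sub, Finset.sum_sub_distrib]

lemma Ep_mul (p c : ℝ) (f : (Fin n → Bool) → ℝ) :
    Ep p (fun x => c * f x) = c * Ep p f := by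
  simp only [Ep, Finset.mul_sum]
  exact Finset.sum_congr rfl fun x _ => by ring

lemma Ep_sum {ι : Type*} (p : ℝ) (s : Finset ι) (f : ι → (Fin n → Bool) → ℝ) :
    Ep p (fun x => ∑ j ∈ s, f j x) = ∑ j ∈ s, Ep p (f j) := by
  simp only [Ep, Finset.mul_sum]
  exact Finset.sum_comm

/-- Cauchy-Schwarz. -/
lemma Ep_cs {p : ℝ} (hp : 0 < p) (hp1 : p < 1) (f g : (Fin n → Bool) → ℝ) :
    (Ep p fun x => f x * g x) ^ 2 ≤ (Ep p fun x => f x ^ 2) * Ep p fun x => g x ^ 2 := by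
  unfold Ep
  apply Finset.sum_sq_le_sum_mul_sum_of_sq_le_mul
  · intro x _; exact mul_nonneg (wt_nonneg hp hp1 x) (sq_nonneg _)
  · intro x _; exact mul_nonneg (wt_nonneg hp hp1 x) (sq_nonneg _)
  · intro x _; exact le_of_eq (by ring)

/-- Averaging first over coordinate `i`. -/
lemma Ep_split (p : ℝ) (i : Fin n) (f : (Fin n → Bool) → ℝ) :
    Ep p f = Ep p fun x =>
      p * f (Function.update x i true) + (1 - p) * f (Function.update x i false) := by
  have hinv : Function.Involutive (fun x : Fin n → Bool => Function.update x i (!x i)) := by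
    intro x; simp
  have key : ∀ H : (Fin n → Bool) → ℝ,
      ∑ x, H (Function.update x i (!x i)) = ∑ x, H x := by
    intro H
    exact (Equiv.sum_comp hinv.toPerm H)
  have hw : ∀ (x : Fin n → Bool), (∏ j, (if x j then p else 1 - p)) =
      (if x i then p else 1 - p) * ∏ j ∈ univ.erase i, (if x j then p else 1 - p) := by
    intro x
    exact (Finset.mul_prod_erase univ _ (Finset.mem_univ i)).symm
  have hr : ∀ (x : Fin n → Bool) (b : Bool),
      ∏ j ∈ univ.erase i, (if Function.update x i b j then p else 1 - p) =
      ∏ j ∈ univ.erase i, (if x j then p else 1 - p) := by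
    intro x b
    apply Finset.prod_congr rfl
    intro j hj
    rw [Function.update_of_ne (Finset.ne_of_mem_erase hj)]
  have h1 := key (fun x => (∏ j, (if x j then p else 1 - p)) * f x)
  have h2 := key (fun x => (∏ j, (if x j then p else 1 - p)) *
    (p * f (Function.update x i true) + (1 - p) * f (Function.update x i false)))
  unfold Ep
  have h3 : ∑ x, (((∏ j, (if x j then p else 1 - p)) * f x) +
      ((∏ j, (if Function.update x i (!x i) j then p else 1 - p)) *
        f (Function.update x i (!x i)))) =
      ∑ x, (((∏ j, (if x j then p else 1 - p)) *
    (p * f (Function.update x i true) + (1 - p) * f (Function.update x i false))) +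
      ((∏ j, (if Function.update x i (!x i) j then p else 1 - p)) *
    (p * f (Function.update (Function.update x i (!x i)) i true) +
      (1 - p) * f (Function.update (Function.update x i (!x i)) i false)))) := by
    apply Finset.sum_congr rfl
    intro x _
    rw [hw x, hw (Function.update x i (!x i)), hr]
    simp only [Function.update_self, Function.update_idem]
    have hx : f x = f (Function.update x i (x i)) := by rw [Function.update_eq_self]
    rw [hx]
    cases h : x i <;> simp <;> ring
  rw [Finset.sum_add_distrib, Finset.sum_add_distrib, h1, h2] at h3
  linarith

/-! ### Characters -/

lemma chi_update {p : ℝ} {T : Finset (Fin n)} {i : Fin n} (hi : i ∉ T) (x : Fin n → Bool)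
    (b : Bool) : chi p T (Function.update x i b) = chi p T x := by
  unfold chi
  apply Finset.prod_congr rfl
  intro j hj
  rw [Function.update_of_ne]
  rintro rfl
  exact hi hj

lemma chi_insert {p : ℝ} {T : Finset (Fin n)} {i : Fin n} (hi : i ∉ T) (x : Fin n → Bool) :
    chi p (insert i T) x =
      ((if x i then (1 : ℝ) else 0) - p) / Real.sqrt (p * (1 - p)) * chi p T x := by
  unfold chi
  rw [Finset.prod_insert hi]

/-- Fourier inversion. -/
lemma inversion {p : ℝ} (hp : 0 < p) (hp1 : p < 1) (f : (Fin n → Bool) → ℝ)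
    (x : Fin n → Bool) : ∑ T, coeff p f T * chi p T x = f x := by
  have hq : 0 < 1 - p := by linarith
  have hs : Real.sqrt (p * (1 - p)) ^ 2 = p * (1 - p) := Real.sq_sqrt (by positivity)
  have hs0 : Real.sqrt (p * (1 - p)) ≠ 0 := (Real.sqrt_pos.mpr (by positivity)).ne'
  have hs' : Real.sqrt (p * (1 - p)) * Real.sqrt (p * (1 - p)) = p * (1 - p) :=
    Real.mul_self_sqrt (by positivity)
  have h1 : ∀ y : Fin n → Bool, ∑ T, chi p T y * chi p T x =
      ∏ i, (1 + (((if y i then (1 : ℝ) else 0) - p) / Real.sqrt (p * (1 - p))) *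
        (((if x i then (1 : ℝ) else 0) - p) / Real.sqrt (p * (1 - p)))) := by
    intro y
    rw [Finset.prod_one_add]
    rw [Finset.powerset_univ]
    apply Finset.sum_congr rfl
    intro T _
    simp only [chi, Finset.prod_mul_distrib]
  have h2 : ∀ y : Fin n → Bool, (∏ i, (if y i then p else 1 - p)) *
      ∑ T, chi p T y * chi p T x = if y = x then 1 else 0 := by
    intro y
    rw [h1, ← Finset.prod_mul_distrib]
    have : ∀ i, (if y i then p else 1 - p) *
        (1 + (((if y i then (1 : ℝ) else 0) - p) / Real.sqrt (p * (1 - p))) *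
        (((if x i then (1 : ℝ) else 0) - p) / Real.sqrt (p * (1 - p)))) =
        if y i = x i then 1 else 0 := by
      intro i
      rw [div_mul_div_comm, hs']
      have hp0 : p ≠ 0 := hp.ne'
      have hq0 : 1 - p ≠ 0 := hq.ne'
      cases y i <;> cases x i <;> simp only [if_true, if_false, Bool.false_eq_true,
        reduceCtorEq] <;> field_simp <;> ring
    simp only [this]
    split_ifs with h
    · subst h; simp
    · obtain ⟨i, hi⟩ := Function.ne_iff.mp h
      exact Finset.prod_eq_zero (Finset.mem_univ i) (by simp [hi])
  calc ∑ T, coeff p f T * chi p T x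
      = ∑ y, f y * ((∏ i, (if y i then p else 1 - p)) * ∑ T, chi p T y * chi p T x) := by
        simp only [coeff, Ep, Finset.sum_mul, Finset.mul_sum]
        rw [Finset.sum_comm]
        exact Finset.sum_congr rfl fun y _ => Finset.sum_congr rfl fun T _ => by ring
    _ = f x := by simp [h2]

lemma parseval {p : ℝ} (hp : 0 < p) (hp1 : p < 1) (f : (Fin n → Bool) → ℝ) :
    ∑ T, coeff p f T ^ 2 = Ep p fun x => f x ^ 2 := by
  have h : (fun x => f x ^ 2) = fun x => ∑ T, coeff p f T * (f x * chi p T x) := by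
    funext x
    have := inversion hp hp1 f x
    calc f x ^ 2 = f x * ∑ T, coeff p f T * chi p T x := by rw [this]; ring
      _ = _ := by rw [Finset.mul_sum]; exact Finset.sum_congr rfl fun T _ => by ring
  rw [h, Ep_sum]
  apply Finset.sum_congr rfl
  intro T _
  rw [Ep_mul, ← coeff, sq]

/-! ### Derivatives and generalised influences -/

/-- The discrete derivative. -/
def dif (i : Fin n) (f : (Fin n → Bool) → ℝ) : (Fin n → Bool) → ℝ :=
  fun x => f (Function.update x i true) - f (Function.update x i false)

lemma coeff_dif_mem {p : ℝ} (i : Fin n) (f : (Fin n → Bool) → ℝ)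
    {T : Finset (Fin n)} (hi : i ∈ T) : coeff p (dif i f) T = 0 := by
  obtain ⟨U, hU, rfl⟩ : ∃ U, i ∉ U ∧ T = insert i U :=
    ⟨T.erase i, Finset.notMem_erase i T, (Finset.insert_erase hi).symm⟩
  unfold coeff
  rw [Ep_split p i]
  have : (fun x => p * (dif i f (Function.update x i true) *
      chi p (insert i U) (Function.update x i true)) +
      (1 - p) * (dif i f (Function.update x i false) *
      chi p (insert i U) (Function.update x i false))) = fun _ => 0 := by
    funext x
    simp only [chi_insert hU, chi_update hU, dif, Function.update_idem, Function.update_self]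
    simp
    ring
  rw [this]
  simp [Ep]

lemma coeff_insert {p : ℝ} (hp : 0 < p) (hp1 : p < 1) (i : Fin n) (f : (Fin n → Bool) → ℝ)
    {T : Finset (Fin n)} (hi : i ∉ T) :
    coeff p f (insert i T) = Real.sqrt (p * (1 - p)) * coeff p (dif i f) T := by
  have hq : 0 < 1 - p := by linarith
  have hs : Real.sqrt (p * (1 - p)) ^ 2 = p * (1 - p) := Real.sq_sqrt (by positivity)
  have hs0 : Real.sqrt (p * (1 - p)) ≠ 0 := (Real.sqrt_pos.mpr (by positivity)).ne'
  unfold coeff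
  rw [Ep_split p i, ← Ep_mul]
  congr 1
  funext x
  simp only [chi_insert hi, chi_update hi, dif, Function.update_self]
  simp only [if_true, Bool.false_eq_true, if_false]
  field_simp
  rw [hs]
  ring

lemma sum_insert_mem {i : Fin n} (g : Finset (Fin n) → ℝ) :
    ∑ T, g T = ∑ T ∈ (univ.erase i).powerset, g T +
      ∑ T ∈ (univ.erase i).powerset, g (insert i T) := by
  rw [← Finset.sum_powerset_insert (Finset.notMem_erase i univ),
    Finset.insert_erase (Finset.mem_univ i), Finset.powerset_univ]

lemma genInf_insert {p : ℝ} (hp : 0 < p) (hp1 : p < 1) {i : Fin n} {S : Finset (Fin n)}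
    (hi : i ∉ S) (f : (Fin n → Bool) → ℝ) :
    genInf p (insert i S) f = genInf p S (dif i f) := by
  have hq : 0 < 1 - p := by linarith
  have hs : Real.sqrt (p * (1 - p)) ^ 2 = p * (1 - p) := Real.sq_sqrt (by positivity)
  have hpq : p * (1 - p) ≠ 0 := by positivity
  have key : ∑ T ∈ Finset.univ.filter (fun T => insert i S ⊆ T), coeff p f T ^ 2 =
      (p * (1 - p)) *
        ∑ T ∈ Finset.univ.filter (fun T => S ⊆ T), coeff p (dif i f) T ^ 2 := by
    rw [Finset.sum_filter, Finset.sum_filter, sum_insert_mem (i := i), sum_insert_mem (i := i)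
      (fun T => if S ⊆ T then coeff p (dif i f) T ^ 2 else 0)]
    have e1 : ∑ T ∈ (univ.erase i).powerset,
        (if insert i S ⊆ T then coeff p f T ^ 2 else 0) = 0 := by
      apply Finset.sum_eq_zero
      intro T hT
      rw [if_neg]
      intro h
      have h1 : i ∈ T := h (Finset.mem_insert_self i S)
      exact Finset.notMem_erase i univ (Finset.mem_powerset.mp hT h1)
    have e2 : ∑ T ∈ (univ.erase i).powerset,
        (if S ⊆ insert i T then coeff p (dif i f) (insert i T) ^ 2 else 0) = 0 := by
      apply Finset.sum_eq_zero
      intro T hT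
      rw [coeff_dif_mem i f (Finset.mem_insert_self i T)]
      simp
    rw [e1, e2, zero_add, add_zero, Finset.mul_sum]
    apply Finset.sum_congr rfl
    intro T hT
    have hiT : i ∉ T := fun h1 =>
      Finset.notMem_erase i univ (Finset.mem_powerset.mp hT h1)
    simp only [Finset.insert_subset_insert_iff hi, coeff_insert hp hp1 i f hiT]
    split_ifs
    · rw [mul_pow, hs]
    · simp
  unfold genInf
  rw [key, Finset.card_insert_of_notMem hi, pow_succ]
  field_simp

lemma coeff_dif_sub (p : ℝ) (i : Fin n) (f : (Fin n → Bool) → ℝ) (T : Finset (Fin n)) :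
    coeff p (dif i f) T = coeff p (fun x => f (Function.update x i true)) T -
      coeff p (fun x => f (Function.update x i false)) T := by
  unfold coeff
  rw [← Ep_sub]
  congr 1
  funext x
  simp only [dif]
  ring

lemma genInf_dif_le {p : ℝ} (hp : 0 < p) (hp1 : p < 1) (i : Fin n) (S : Finset (Fin n))
    (f : (Fin n → Bool) → ℝ) :
    genInf p S (dif i f) ≤ 2 * genInf p S (fun x => f (Function.update x i true)) +
      2 * genInf p S (fun x => f (Function.update x i false)) := by
  have hq : 0 < 1 - p := by linarith
  unfold genInf
  rw [← mul_div_assoc, ← mul_div_assoc, ← add_div]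
  apply div_le_div_of_nonneg_right _ (by positivity)
  rw [Finset.mul_sum, Finset.mul_sum, ← Finset.sum_add_distrib]
  apply Finset.sum_le_sum
  intro T _
  rw [coeff_dif_sub]
  nlinarith [sq_nonneg (coeff p (fun x => f (Function.update x i true)) T +
      coeff p (fun x => f (Function.update x i false)) T)]

lemma genInf_le {p : ℝ} (hp : 0 < p) (hp2 : p ≤ 1 / 2) (S : Finset (Fin n)) :
    ∀ (f : (Fin n → Bool) → ℝ) (ε : ℝ),
      (∀ U ⊆ S, Ep p (fun x => restrict1 U f x ^ 2) ≤ ε) → genInf p S f ≤ 6 ^ S.card * ε := by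
  have hp1 : p < 1 := by linarith
  induction S using Finset.induction_on with
  | empty =>
    intro f ε h
    have h0 := h ∅ (Finset.Subset.refl _)
    simp only [restrict1, Finset.notMem_empty, if_false] at h0
    simp only [genInf, Finset.empty_subset, Finset.filter_true, Finset.card_empty, pow_zero,
      div_one, one_mul]
    rw [parseval hp hp1]
    exact h0
  | insert i S hi ih =>
    intro f ε h
    rw [genInf_insert hp hp1 hi, Finset.card_insert_of_notMem hi]
    have h1 := ih (fun x => f (Function.update x i true)) ε (by
      intro U hU
      refine le_trans (le_of_eq ?_) (h (insert i U) (Finset.insert_subset_insert i hU))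
      congr 1
      funext x
      simp only [restrict1]
      congr 2
      funext j
      by_cases hj : j = i
      · subst hj; simp
      · simp [hj])
    have h2 := ih (fun x => f (Function.update x i false)) (2 * ε) (by
      intro U hU
      have hiU : i ∉ U := fun h => hi (hU h)
      have h3 := h U (hU.trans (Finset.subset_insert i S))
      rw [Ep_split p i] at h3
      have h4 : Ep p (fun x => restrict1 U (fun x => f (Function.update x i false)) x ^ 2) ≤
          Ep p (fun x => 2 * (p * restrict1 U f (Function.update x i true) ^ 2 +
            (1 - p) * restrict1 U f (Function.update x i false) ^ 2)) := by
        apply Ep_mono hp hp1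
        intro x
        have : restrict1 U (fun x => f (Function.update x i false)) x =
            restrict1 U f (Function.update x i false) := by
          simp only [restrict1]
          congr 1
          funext j
          by_cases hj : j = i
          · subst hj; simp [hiU]
          · simp [hj]
        rw [this]
        have := mul_nonneg hp.le (sq_nonneg (restrict1 U f (Function.update x i true)))
        nlinarith [sq_nonneg (restrict1 U f (Function.update x i false))]
      rw [Ep_mul] at h4
      linarith)
    have h3 := genInf_dif_le hp hp1 i S f
    rw [pow_succ]
    linarith

/-- Total influence through Fourier coefficients. -/
lemma totalInf_eq {p : ℝ} (hp : 0 < p) (hp1 : p < 1) (f : (Fin n → Bool) → ℝ)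
    (hf : ∀ x, f x = 0 ∨ f x = 1) :
    p * (1 - p) * totalInf p f = ∑ T : Finset (Fin n), (T.card : ℝ) * coeff p f T ^ 2 := by
  have hq : 0 < 1 - p := by linarith
  have hpq : p * (1 - p) ≠ 0 := by positivity
  have h1 : ∀ i : Fin n, (p * (1 - p)) *
      (Ep p fun x => if f (Function.update x i (!x i)) = f x then (0 : ℝ) else 1) =
      ∑ T : Finset (Fin n), if i ∈ T then coeff p f T ^ 2 else 0 := by
    intro i
    have e1 : (fun x => if f (Function.update x i (!x i)) = f x then (0 : ℝ) else 1) =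
        fun x => dif i f x ^ 2 := by
      funext x
      have hx : f x = f (Function.update x i (x i)) := by rw [Function.update_eq_self]
      rw [hx]
      unfold dif
      rcases hf (Function.update x i true) with h1 | h1 <;>
      rcases hf (Function.update x i false) with h2 | h2 <;>
      cases h : x i <;> simp [h1, h2]
    rw [e1, ← parseval hp hp1]
    have e2 := genInf_insert hp hp1 (Finset.notMem_empty i) f
    simp only [genInf, Finset.empty_subset, Finset.filter_true, Finset.card_empty, pow_zero,
      div_one, insert_empty_eq, Finset.card_singleton, pow_one, Finset.singleton_subset_iff] at e2
    rw [← e2, mul_div_cancel₀ _ hpq, Finset.sum_filter]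
  unfold totalInf
  rw [Finset.mul_sum, Finset.sum_congr rfl fun i _ => h1 i, Finset.sum_comm]
  apply Finset.sum_congr rfl
  intro T _
  simp

/-! ### Hypercontractivity -/

lemma four_point {p : ℝ} (hp : 0 < p) (hp1 : p < 1) (a b c d : ℝ) :
    p * ((a + (1 - p) / Real.sqrt (p * (1 - p)) * b) ^ 2 *
        (c + (1 - p) / Real.sqrt (p * (1 - p)) * d) ^ 2) +
      (1 - p) * ((a + (0 - p) / Real.sqrt (p * (1 - p)) * b) ^ 2 *
        (c + (0 - p) / Real.sqrt (p * (1 - p)) * d) ^ 2) ≤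
    a ^ 2 * c ^ 2 + 4 * (a ^ 2 * d ^ 2) + 4 * (b ^ 2 * c ^ 2) +
      3 * ((p * (1 - p))⁻¹ * (b ^ 2 * d ^ 2)) := by
  have hq : 0 < 1 - p := by linarith
  have hpq : 0 < p * (1 - p) := by positivity
  set s := Real.sqrt (p * (1 - p)) with hsdef
  have hs : s ^ 2 = p * (1 - p) := Real.sq_sqrt hpq.le
  have hs0 : 0 < s := Real.sqrt_pos.mpr hpq
  set r := s⁻¹ with hr
  have hr2 : (p * (1 - p))⁻¹ = r ^ 2 := by rw [← hs, hr, inv_pow]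
  have hone : r ^ 2 * (p * (1 - p)) = 1 := by rw [← hr2]; exact inv_mul_cancel₀ hpq.ne'
  rw [hr2]
  simp only [div_eq_mul_inv]
  rw [← hr]
  have expand : p * ((a + (1 - p) * r * b) ^ 2 * (c + (1 - p) * r * d) ^ 2) +
      (1 - p) * ((a + (0 - p) * r * b) ^ 2 * (c + (0 - p) * r * d) ^ 2) =
      a ^ 2 * c ^ 2 + (r ^ 2 * (p * (1 - p))) * (a ^ 2 * d ^ 2 + b ^ 2 * c ^ 2 + 4 * (a * b * c * d))
      + (r ^ 2 * (p * (1 - p))) * (2 * ((1 - 2 * p) * r) * (a * b * d ^ 2 + c * d * b ^ 2))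
      + (r ^ 2 * (p * (1 - p))) * ((1 - 3 * (p * (1 - p))) * r ^ 2 * (b ^ 2 * d ^ 2)) := by
    ring
  rw [expand, hone]
  have i1 : 4 * (a * b * c * d) ≤ 2 * (a ^ 2 * d ^ 2) + 2 * (b ^ 2 * c ^ 2) := by
    nlinarith [sq_nonneg (a * d - b * c)]
  have i2 : 2 * ((1 - 2 * p) * r) * (a * b * d ^ 2) ≤
      a ^ 2 * d ^ 2 + (1 - 2 * p) ^ 2 * (r ^ 2 * (b ^ 2 * d ^ 2)) := by
    nlinarith [sq_nonneg (a * d - (1 - 2 * p) * r * (b * d))]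
  have i3 : 2 * ((1 - 2 * p) * r) * (c * d * b ^ 2) ≤
      b ^ 2 * c ^ 2 + (1 - 2 * p) ^ 2 * (r ^ 2 * (b ^ 2 * d ^ 2)) := by
    nlinarith [sq_nonneg (b * c - (1 - 2 * p) * r * (b * d))]
  have hX : 0 ≤ r ^ 2 * (b ^ 2 * d ^ 2) := by positivity
  have i4 : (1 - 2 * p) ^ 2 * (r ^ 2 * (b ^ 2 * d ^ 2)) ≤ 1 * (r ^ 2 * (b ^ 2 * d ^ 2)) := by
    apply mul_le_mul_of_nonneg_right _ hX
    nlinarith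
  have i5 : (1 - 3 * (p * (1 - p))) * r ^ 2 * (b ^ 2 * d ^ 2) ≤ 1 * (r ^ 2 * (b ^ 2 * d ^ 2)) := by
    rw [mul_assoc]
    apply mul_le_mul_of_nonneg_right _ hX
    nlinarith
  nlinarith

/-- Polynomial with coefficients `c` in the coordinates of `A`. -/
noncomputable def poly (p : ℝ) (A : Finset (Fin n)) (c : Finset (Fin n) → ℝ)
    (x : Fin n → Bool) : ℝ := ∑ T ∈ A.powerset, c T * chi p T x

/-- Weighted square norm of the part of `c` above `S`. -/
noncomputable def wsq (A S : Finset (Fin n)) (c : Finset (Fin n) → ℝ) : ℝ :=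
  ∑ T ∈ A.powerset, if S ⊆ T then 4 ^ T.card * c T ^ 2 else 0

lemma wsq_nonneg (A S : Finset (Fin n)) (c : Finset (Fin n) → ℝ) : 0 ≤ wsq A S c := by
  apply Finset.sum_nonneg
  intro T _
  split_ifs <;> positivity

lemma poly_update {p : ℝ} {A : Finset (Fin n)} {i : Fin n} (hi : i ∉ A)
    (c : Finset (Fin n) → ℝ) (x : Fin n → Bool) (b : Bool) :
    poly p A c (Function.update x i b) = poly p A c x := by
  apply Finset.sum_congr rfl
  intro T hT
  rw [chi_update fun h => hi (Finset.mem_powerset.mp hT h)]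

lemma poly_insert {p : ℝ} {A : Finset (Fin n)} {i : Fin n} (hi : i ∉ A)
    (c : Finset (Fin n) → ℝ) (x : Fin n → Bool) :
    poly p (insert i A) c x = poly p A c x +
      ((if x i then (1 : ℝ) else 0) - p) / Real.sqrt (p * (1 - p)) *
        poly p A (fun T => c (insert i T)) x := by
  unfold poly
  rw [Finset.sum_powerset_insert hi, Finset.mul_sum]
  congr 1
  apply Finset.sum_congr rfl
  intro T hT
  rw [chi_insert fun h => hi (Finset.mem_powerset.mp hT h)]
  ring

lemma wsq_insert {A S : Finset (Fin n)} {i : Fin n} (hi : i ∉ A) (hS : S ⊆ A)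
    (c : Finset (Fin n) → ℝ) :
    wsq (insert i A) S c = wsq A S c + 4 * wsq A S (fun T => c (insert i T)) := by
  unfold wsq
  rw [Finset.sum_powerset_insert hi, Finset.mul_sum]
  congr 1
  apply Finset.sum_congr rfl
  intro T hT
  have hiT : i ∉ T := fun h => hi (Finset.mem_powerset.mp hT h)
  simp only [Finset.subset_insert_iff_of_notMem (fun h => hi (hS h)),
    Finset.card_insert_of_notMem hiT]
  split_ifs
  · ring
  · simp

lemma wsq_insert' {A S : Finset (Fin n)} {i : Fin n} (hi : i ∉ A) (hS : S ⊆ A)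
    (c : Finset (Fin n) → ℝ) :
    wsq (insert i A) (insert i S) c = 4 * wsq A S (fun T => c (insert i T)) := by
  unfold wsq
  rw [Finset.sum_powerset_insert hi, Finset.mul_sum]
  rw [Finset.sum_eq_zero, zero_add]
  · apply Finset.sum_congr rfl
    intro T hT
    have hiT : i ∉ T := fun h => hi (Finset.mem_powerset.mp hT h)
    simp only [Finset.insert_subset_insert_iff (fun h => hi (hS h)),
      Finset.card_insert_of_notMem hiT]
    split_ifs
    · ring
    · simp
  · intro T hT
    rw [if_neg]
    intro h
    exact hi (Finset.mem_powerset.mp hT (h (Finset.mem_insert_self i S)))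

lemma hypercontractive {p : ℝ} (hp : 0 < p) (hp1 : p < 1) (A : Finset (Fin n)) :
    ∀ c e : Finset (Fin n) → ℝ,
      Ep p (fun x => poly p A c x ^ 2 * poly p A e x ^ 2) ≤
        ∑ S ∈ A.powerset, (p * (1 - p))⁻¹ ^ S.card * (wsq A S c * wsq A S e) := by
  have hq : 0 < 1 - p := by linarith
  induction A using Finset.induction_on with
  | empty =>
    intro c e
    have hE : Ep p (fun _ : Fin n → Bool => (1 : ℝ)) = 1 := by
      unfold Ep
      simp only [mul_one]
      have := Finset.prod_univ_sum (fun _ : Fin n => (Finset.univ : Finset Bool))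
        (fun _ b => if b then p else 1 - p)
      rw [Fintype.piFinset_univ] at this
      rw [← this]
      simp
    have : (fun x : Fin n → Bool => poly p ∅ c x ^ 2 * poly p ∅ e x ^ 2) =
        fun x => (c ∅ ^ 2 * e ∅ ^ 2) * 1 := by
      funext x
      simp [poly, chi]
    rw [this, Ep_mul, hE]
    simp [wsq]
  | insert i A hi ih =>
    intro c e
    set c' := fun T => c (insert i T) with hc'
    set e' := fun T => e (insert i T) with he'
    have h1 : Ep p (fun x => poly p (insert i A) c x ^ 2 * poly p (insert i A) e x ^ 2) ≤
        Ep p (fun x => poly p A c x ^ 2 * poly p A e x ^ 2 +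
          4 * (poly p A c x ^ 2 * poly p A e' x ^ 2) +
          4 * (poly p A c' x ^ 2 * poly p A e x ^ 2) +
          3 * ((p * (1 - p))⁻¹ * (poly p A c' x ^ 2 * poly p A e' x ^ 2))) := by
      rw [Ep_split p i]
      apply Ep_mono hp hp1
      intro x
      simp only [poly_insert hi, poly_update hi, Function.update_self]
      simp only [if_true, Bool.false_eq_true, if_false]
      exact four_point hp hp1 _ _ _ _
    rw [Ep_add, Ep_add, Ep_add, Ep_mul, Ep_mul, Ep_mul, Ep_mul] at h1
    refine h1.trans ?_
    have hinv : 0 < (p * (1 - p))⁻¹ := by positivity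
    have g1 := ih c e
    have g2 := ih c e'
    have g3 := ih c' e
    have g4 := mul_le_mul_of_nonneg_left (ih c' e') hinv.le
    have h2 : ∑ S ∈ A.powerset, (p * (1 - p))⁻¹ ^ S.card * (wsq A S c * wsq A S e) +
        4 * ∑ S ∈ A.powerset, (p * (1 - p))⁻¹ ^ S.card * (wsq A S c * wsq A S e') +
        4 * ∑ S ∈ A.powerset, (p * (1 - p))⁻¹ ^ S.card * (wsq A S c' * wsq A S e) +
        3 * ((p * (1 - p))⁻¹ *
          ∑ S ∈ A.powerset, (p * (1 - p))⁻¹ ^ S.card * (wsq A S c' * wsq A S e')) ≤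
        ∑ S ∈ (insert i A).powerset, (p * (1 - p))⁻¹ ^ S.card *
          (wsq (insert i A) S c * wsq (insert i A) S e) := by
      rw [Finset.sum_powerset_insert hi]
      simp only [Finset.mul_sum, ← Finset.sum_add_distrib]
      apply Finset.sum_le_sum
      intro S hS
      have hSA := Finset.mem_powerset.mp hS
      rw [wsq_insert hi hSA, wsq_insert hi hSA, wsq_insert' hi hSA, wsq_insert' hi hSA,
        Finset.card_insert_of_notMem fun h => hi (hSA h), pow_succ]
      rw [← hc', ← he']
      have hw : 0 < (p * (1 - p))⁻¹ ^ S.card := by positivity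
      set w := (p * (1 - p))⁻¹ ^ S.card
      have hβ : 0 ≤ w * (wsq A S c' * wsq A S e') :=
        mul_nonneg hw.le (mul_nonneg (wsq_nonneg _ _ _) (wsq_nonneg _ _ _))
      have hβ' : 0 ≤ (p * (1 - p))⁻¹ * (w * (wsq A S c' * wsq A S e')) :=
        mul_nonneg hinv.le hβ
      nlinarith
    linarith

/-! ### The main argument -/

lemma main_bound {p : ℝ} (hp : 0 < p) (hp2 : p ≤ 1 / 2) (d : ℕ) (ε : ℝ)
    (f : (Fin n → Bool) → ℝ) (hf : ∀ x, f x = 0 ∨ f x = 1)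
    (hε : ∀ U : Finset (Fin n), U.card ≤ d → Ep p (restrict1 U f) ≤ ε) :
    (∑ T : Finset (Fin n), if T.card ≤ d then coeff p f T ^ 2 else 0) ^ 4 ≤
      192 ^ d * ε * Ep p f ^ 4 := by
  have hp1 : p < 1 := by linarith
  have hq : 0 < 1 - p := by linarith
  have hfsq : ∀ x, f x ^ 2 = f x := by
    intro x; rcases hf x with h | h <;> simp [h]
  have hf0 : ∀ x, 0 ≤ f x := by
    intro x; rcases hf x with h | h <;> simp [h]
  have hμ : 0 ≤ Ep p f := Ep_nonneg hp hp1 hf0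
  have hε0 : 0 ≤ ε := le_trans (Ep_nonneg hp hp1 fun x => hf0 _) (hε ∅ (by simp))
  set W := ∑ T : Finset (Fin n), if T.card ≤ d then coeff p f T ^ 2 else 0 with hW
  set c : Finset (Fin n) → ℝ := fun T => if T.card ≤ d then coeff p f T else 0 with hc
  have hWμ : W ≤ Ep p f := by
    have := parseval hp hp1 f
    simp only [hfsq] at this
    change W ≤ Ep p (fun x => f x)
    rw [← this]
    apply Finset.sum_le_sum
    intro T _
    split_ifs
    · exact le_rfl
    · positivity
  have hW0 : 0 ≤ W := by
    apply Finset.sum_nonneg; intro T _; split_ifs <;> positivity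
  have hWE : W = Ep p (fun x => f x * poly p univ c x) := by
    have : (fun x => f x * poly p univ c x) = fun x => ∑ T, c T * (f x * chi p T x) := by
      funext x
      simp only [poly, Finset.powerset_univ, Finset.mul_sum]
      exact Finset.sum_congr rfl fun T _ => by ring
    rw [this, Ep_sum]
    apply Finset.sum_congr rfl
    intro T _
    rw [Ep_mul, ← coeff]
    simp only [hc]
    split_ifs
    · ring
    · ring
  set g := poly p univ c with hg
  -- Cauchy-Schwarz twice
  have cs1 : W ^ 2 ≤ Ep p f * Ep p (fun x => f x * g x ^ 2) := by
    have := Ep_cs hp hp1 f (fun x => f x * g x)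
    simp only [mul_pow, hfsq] at this
    have e : (fun x => f x * (f x * g x)) = fun x => f x * g x := by
      funext x; rw [← mul_assoc, ← sq, hfsq]
    rw [e, ← hWE] at this
    exact this
  have cs2 : Ep p (fun x => f x * g x ^ 2) ^ 2 ≤ Ep p f * Ep p (fun x => g x ^ 2 * g x ^ 2) := by
    have := Ep_cs hp hp1 f (fun x => g x ^ 2)
    simp only [hfsq] at this
    have e : (fun x => (g x ^ 2) ^ 2) = fun x => g x ^ 2 * g x ^ 2 := by funext x; ring
    rw [e] at this
    exact this
  have hyp := hypercontractive hp hp1 univ c c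
  rw [← hg] at hyp
  -- bounding the weighted sums
  have hwS : ∀ S : Finset (Fin n),
      (p * (1 - p))⁻¹ ^ S.card * (wsq univ S c * wsq univ S c) ≤
        24 ^ d * ε * wsq univ S c := by
    intro S
    by_cases hS : S.card ≤ d
    · have b1 : wsq univ S c ≤
          4 ^ d * ∑ T ∈ Finset.univ.filter (fun T => S ⊆ T), coeff p f T ^ 2 := by
        unfold wsq
        rw [Finset.powerset_univ, Finset.sum_filter, Finset.mul_sum]
        apply Finset.sum_le_sum
        intro T _
        split_ifs with h
        · simp only [hc]
          split_ifs with h'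
          · apply mul_le_mul_of_nonneg_right _ (sq_nonneg _)
            exact pow_le_pow_right₀ (by norm_num) h'
          · simp; positivity
        · simp
      have b2 := genInf_le hp hp2 S f ε (by
        intro U hU
        have : (fun x => restrict1 U f x ^ 2) = restrict1 U f := by
          funext x; exact hfsq _
        rw [this]
        exact hε U ((Finset.card_le_card hU).trans hS))
      have b3 : (p * (1 - p))⁻¹ ^ S.card * wsq univ S c ≤ 24 ^ d * ε := by
        calc (p * (1 - p))⁻¹ ^ S.card * wsq univ S c
            ≤ (p * (1 - p))⁻¹ ^ S.card *
              (4 ^ d * ∑ T ∈ Finset.univ.filter (fun T => S ⊆ T), coeff p f T ^ 2) := by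
              apply mul_le_mul_of_nonneg_left b1 (by positivity)
          _ = 4 ^ d * genInf p S f := by
              unfold genInf
              rw [inv_pow, div_eq_mul_inv]; ring
          _ ≤ 4 ^ d * (6 ^ d * ε) := by
              apply mul_le_mul_of_nonneg_left _ (by positivity)
              refine b2.trans ?_
              apply mul_le_mul_of_nonneg_right _ hε0
              exact pow_le_pow_right₀ (by norm_num) hS
          _ = 24 ^ d * ε := by
              rw [← mul_assoc, ← mul_pow]; norm_num
      rw [← mul_assoc]
      exact mul_le_mul_of_nonneg_right b3 (wsq_nonneg _ _ _)
    · have : wsq univ S c = 0 := by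
        apply Finset.sum_eq_zero
        intro T _
        split_ifs with h
        · simp only [hc]
          rw [if_neg]
          · simp
          · intro h'
            exact hS ((Finset.card_le_card h).trans h')
        · rfl
      rw [this]; simp
  have hsum : ∑ S : Finset (Fin n), wsq univ S c ≤ 8 ^ d * W := by
    unfold wsq
    rw [Finset.sum_comm, Finset.powerset_univ, hW, Finset.mul_sum]
    apply Finset.sum_le_sum
    intro T _
    rw [← Finset.sum_filter, Finset.sum_const]
    have : (Finset.univ.filter fun S : Finset (Fin n) => S ⊆ T) = T.powerset := by
      ext S; simp
    rw [this, Finset.card_powerset]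
    simp only [hc]
    split_ifs with h
    · rw [nsmul_eq_mul, ← mul_assoc]
      apply mul_le_mul_of_nonneg_right _ (sq_nonneg _)
      push_cast
      rw [← mul_pow]
      norm_num
      exact pow_le_pow_right₀ (by norm_num) h
    · simp
  have hg4 : Ep p (fun x => g x ^ 2 * g x ^ 2) ≤ 192 ^ d * ε * Ep p f := by
    refine hyp.trans ?_
    rw [Finset.powerset_univ]
    calc _ ≤ ∑ S : Finset (Fin n), 24 ^ d * ε * wsq univ S c :=
          Finset.sum_le_sum fun S _ => hwS S
      _ = 24 ^ d * ε * ∑ S : Finset (Fin n), wsq univ S c := by rw [Finset.mul_sum]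
      _ ≤ 24 ^ d * ε * (8 ^ d * Ep p f) := by
          apply mul_le_mul_of_nonneg_left _ (by positivity)
          exact hsum.trans (mul_le_mul_of_nonneg_left hWμ (by positivity))
      _ = 192 ^ d * ε * Ep p f := by
          have : (192 : ℝ) ^ d = 24 ^ d * 8 ^ d := by rw [← mul_pow]; norm_num
          rw [this]; ring
  calc W ^ 4 = (W ^ 2) ^ 2 := by ring
    _ ≤ (Ep p f * Ep p (fun x => f x * g x ^ 2)) ^ 2 :=
        pow_le_pow_left₀ (sq_nonneg _) cs1 2
    _ = Ep p f ^ 2 * Ep p (fun x => f x * g x ^ 2) ^ 2 := by ring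
    _ ≤ Ep p f ^ 2 * (Ep p f * (192 ^ d * ε * Ep p f)) := by
        apply mul_le_mul_of_nonneg_left _ (sq_nonneg _)
        exact cs2.trans (mul_le_mul_of_nonneg_left hg4 hμ)
    _ = 192 ^ d * ε * Ep p f ^ 4 := by ring

lemma low_weight {p K : ℝ} (hp : 0 < p) (hp2 : p ≤ 1 / 2) (d : ℕ) (hd : 2 * K ≤ d + 1)
    (f : (Fin n → Bool) → ℝ) (hf : ∀ x, f x = 0 ∨ f x = 1)
    (hI : p * totalInf p f < K * Ep p f) :
    Ep p f / 2 < ∑ T : Finset (Fin n), if T.card ≤ d then coeff p f T ^ 2 else 0 := by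
  have hp1 : p < 1 := by linarith
  have hfsq : ∀ x, f x ^ 2 = f x := by
    intro x; rcases hf x with h | h <;> simp [h]
  have hT := totalInf_eq hp hp1 f hf
  have hP := parseval hp hp1 f
  simp only [hfsq] at hP
  change _ = Ep p f at hP
  have hI0 : 0 ≤ totalInf p f := by
    apply Finset.sum_nonneg
    intro i _
    apply Ep_nonneg hp hp1
    intro x
    split_ifs <;> norm_num
  set W := ∑ T : Finset (Fin n), if T.card ≤ d then coeff p f T ^ 2 else 0 with hW
  have h1 : ((d : ℝ) + 1) * (Ep p f - W) ≤
      ∑ T : Finset (Fin n), (T.card : ℝ) * coeff p f T ^ 2 := by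
    rw [← hP, hW, ← Finset.sum_sub_distrib, Finset.mul_sum]
    apply Finset.sum_le_sum
    intro T _
    split_ifs with h
    · simp; positivity
    · rw [sub_zero]
      apply mul_le_mul_of_nonneg_right _ (sq_nonneg _)
      have : d + 1 ≤ T.card := by omega
      exact_mod_cast this
  rw [← hT] at h1
  have h2 : p * (1 - p) * totalInf p f ≤ p * totalInf p f := by
    apply mul_le_mul_of_nonneg_right _ hI0
    nlinarith
  by_contra hcon
  push Not at hcon
  have hd0 : (0 : ℝ) ≤ (d : ℝ) + 1 := by positivity
  have hμ : 0 ≤ Ep p f := by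
    apply Ep_nonneg hp hp1
    intro x; rcases hf x with h | h <;> simp [h]
  have h3 : ((d : ℝ) + 1) * (Ep p f / 2) ≤ ((d : ℝ) + 1) * (Ep p f - W) :=
    mul_le_mul_of_nonneg_left (by linarith) hd0
  have h4 : 2 * K * (Ep p f / 2) ≤ ((d : ℝ) + 1) * (Ep p f / 2) :=
    mul_le_mul_of_nonneg_right hd (by linarith)
  linarith

/-- a variant of the Kahn--Kalai conjecture (Theorem 1.5). -/
theorem statement11 :
    ∃ C : ℝ, 1 ≤ C ∧
      ∀ (n : ℕ) (p K : ℝ) (f : (Fin n → Bool) → ℝ),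
        0 < p → p ≤ 1/2 → 1 ≤ K → (∀ x, f x = 0 ∨ f x = 1) →
        p * totalInf p f < K * Ep p f →
        ∃ J : Finset (Fin n), (J.card : ℝ) ≤ C * K ∧
          Real.exp (-(C * K)) ≤ Ep p (restrict1 J f) := by
  refine ⟨20, by norm_num, ?_⟩
  intro n p K f hp hp2 hK hf hI
  by_contra hcon
  push Not at hcon
  have hp1 : p < 1 := by linarith
  set d := ⌊2 * K⌋₊ with hd
  have hdle : (d : ℝ) ≤ 2 * K := Nat.floor_le (by linarith)
  have hdlt : 2 * K < d + 1 := Nat.lt_floor_add_one _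
  have hb := main_bound hp hp2 d (Real.exp (-(20 * K))) f hf (by
    intro U hU
    have hU' : (U.card : ℝ) ≤ d := by exact_mod_cast hU
    exact (hcon U (by linarith)).le)
  have hl := low_weight hp hp2 d hdlt.le f hf hI
  have hI0 : 0 ≤ totalInf p f := by
    apply Finset.sum_nonneg
    intro i _
    apply Ep_nonneg hp hp1
    intro x
    split_ifs <;> norm_num
  have hμ : 0 < Ep p f := by
    have : 0 < K * Ep p f := lt_of_le_of_lt (mul_nonneg hp.le hI0) hI
    exact pos_of_mul_pos_right this (by linarith)
  have h4 := pow_lt_pow_left₀ hl (by positivity) (n := 4) (by norm_num)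
  have h5 : (Ep p f / 2) ^ 4 < 192 ^ d * Real.exp (-(20 * K)) * Ep p f ^ 4 := lt_of_lt_of_le h4 hb
  have e1 : (2 : ℝ) ≤ Real.exp 1 := by
    have := Real.add_one_le_exp (1 : ℝ); linarith
  have e8 : (256 : ℝ) ≤ Real.exp 8 := by
    have := pow_le_pow_left₀ (by norm_num) e1 8
    rw [← Real.exp_nat_mul] at this
    norm_num at this
    exact this
  have e4 : (16 : ℝ) ≤ Real.exp 4 := by
    have := pow_le_pow_left₀ (by norm_num) e1 4
    rw [← Real.exp_nat_mul] at this
    norm_num at this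
    exact this
  have e2 : (192 : ℝ) ^ d ≤ Real.exp (16 * K) := by
    calc (192 : ℝ) ^ d ≤ Real.exp 8 ^ d := pow_le_pow_left₀ (by norm_num) (by linarith) d
      _ = Real.exp (d * 8) := by rw [Real.exp_nat_mul]
      _ ≤ Real.exp (16 * K) := Real.exp_le_exp.mpr (by linarith)
  have e3 : (192 : ℝ) ^ d * Real.exp (-(20 * K)) * 16 ≤ 1 := by
    calc (192 : ℝ) ^ d * Real.exp (-(20 * K)) * 16
        ≤ Real.exp (16 * K) * Real.exp (-(20 * K)) * Real.exp 4 := by gcongr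
      _ = Real.exp (16 * K + -(20 * K) + 4) := by rw [Real.exp_add, Real.exp_add]
      _ ≤ 1 := by rw [Real.exp_le_one_iff]; linarith
  have hμ4 : 0 < Ep p f ^ 4 := by positivity
  nlinarith

end GlobalHC
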